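/- Let X be a two-dimensional real normed vector space and let x ∈ X be a unit vector. Then there exists a unit vector y ∈ X with [x, y] = 0. -/

import Mathlib

/-- The bracket `[a, b] = ‖a + b‖² − ‖a − b‖²`, which is `4⟪a, b⟫` in an inner product space, so
that its vanishing is a notion of orthogonality in a normed space. -/
def normBracket {E : Type*} [SeminormedAddCommGroup E] (a b : E) : ℝ :=
  ‖a + b‖ ^ 2 - ‖a - b‖ ^ 2

section SeminormedAddCommGroup

variable {E : Type*} [SeminormedAddCommGroup E]

theorem normBracket_neg_right (a b : E) : normBracket a (-b) = -normBracket a b := by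
  simp only [normBracket, ← sub_eq_add_neg, sub_neg_eq_add, neg_sub]

theorem continuous_normBracket_right (a : E) : Continuous (normBracket a) := by
  unfold normBracket
  fun_prop

end SeminormedAddCommGroup

theorem exists_mem_eq_zero_of_isPreconnected_of_odd {E α : Type*} [TopologicalSpace E] [Neg E]
    [AddCommGroup α] [LinearOrder α] [IsOrderedAddMonoid α] [TopologicalSpace α]
    [OrderClosedTopology α] {s : Set E} {f : E → α} (hs : IsPreconnected s) (hne : s.Nonempty)
    (hneg : ∀ y ∈ s, -y ∈ s) (hf : ContinuousOn f s) (hodd : ∀ y ∈ s, f (-y) = -f y) :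
    ∃ y ∈ s, f y = 0 := by
  obtain ⟨y, hy⟩ := hne
  rcases le_total (f y) 0 with hle | hge
  · exact hs.intermediate_value hy (hneg y hy) hf ⟨hle, by simpa [hodd y hy] using hle⟩
  · exact hs.intermediate_value (hneg y hy) hy hf ⟨by simpa [hodd y hy] using hge, hge⟩

theorem exists_unit_bracket_orthogonal_general {X : Type*} [NormedAddCommGroup X]
    [NormedSpace ℝ X] (hrank : 1 < Module.rank ℝ X) (x : X) {r : ℝ} (hr : 0 ≤ r) :
    ∃ y : X, ‖y‖ = r ∧ normBracket x y = 0 := by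
  have : Nontrivial X := rank_pos_iff_nontrivial.mp (zero_lt_one.trans hrank)
  obtain ⟨y, hy, hxy⟩ := exists_mem_eq_zero_of_isPreconnected_of_odd
    (isPreconnected_sphere hrank (0 : X) r) (NormedSpace.sphere_nonempty.mpr hr)
    (fun y hy ↦ by simpa using hy) (continuous_normBracket_right x).continuousOn
    (fun y _ ↦ normBracket_neg_right x y)
  exact ⟨y, mem_sphere_zero_iff_norm.mp hy, hxy⟩

/-- In a two-dimensional real normed vector space, every unit vector `x` admits a unit
vector `y` with bracket `[x, y] = ‖x + y‖² − ‖x − y‖² = 0`. -/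
theorem exists_unit_bracket_orthogonal {X : Type*} [NormedAddCommGroup X] [NormedSpace ℝ X]
    (hdim : Module.finrank ℝ X = 2) (x : X) (hx : ‖x‖ = 1) :
    ∃ y : X, ‖y‖ = 1 ∧ ‖x + y‖ ^ 2 - ‖x - y‖ ^ 2 = 0 :=
  exists_unit_bracket_orthogonal_general
    (Module.lt_rank_of_lt_finrank (by simp [hdim])) x zero_le_one
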